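/- Let R be a commutative ring, I ⊆ R a finitely generated ideal, and A an associative unital R-algebra. Suppose that A, regarded as an R-module, is I-adically complete and separated (i.e. the canonical map A → lim_n A/I^nA is bijective). If the quotient ring A/IA is left Noetherian, then A is left Noetherian. -/

import Mathlib

/-!
Write `I = (h₁, …, hᵣ)` and order the monomials in the `hᵢ` degree lexicographically. For an
`A`-submodule `J` of `M`, the coefficients of `h ^ α` in leading terms of elements of `J` form a
submodule that contains `I M` and grows with `α`. As `M / I M` is Noetherian, Dickson's lemma leaves
only finitely many exponents to consider, so some finitely generated `N ≤ J` has all the leading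
coefficients of `J`. Cancelling leading terms one by one gives a constant `D` with
`J ∩ Iⁿ M ⊆ Iⁿ⁻ᴰ N + Iⁿ⁺¹ M` for all `n`. Since `N` is a quotient of some `Aᵏ`, the resulting
series converge in `N`, and `J = N`.
-/

open Pointwise

lemma exists_finset_forall_exists_le_map_eq {ι P : Type*} [PartialOrder ι]
    [WellQuasiOrderedLE ι] [PartialOrder P] [WellFoundedGT P] {f : ι → P} (hf : Monotone f) :
    ∃ S : Finset ι, ∀ i, ∃ j ∈ S, j ≤ i ∧ f j = f i := by
  let r : ι → ι → Prop := fun i j ↦ i ≤ j ∧ f i = f j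
  -- Along a monotone subsequence, `f` is eventually constant by the ascending chain condition.
  have hr : WellQuasiOrdered r := fun e ↦ by
    obtain ⟨g, hg⟩ := (wellQuasiOrdered_le (α := ι)).exists_monotone_subseq e
    obtain ⟨n, hn⟩ := WellFoundedGT.monotone_chain_condition
      ⟨fun k ↦ f (e (g k)), fun k l hkl ↦ hf (hg k l hkl)⟩
    exact ⟨g n, g (n + 1), g.strictMono n.lt_succ_self, hg _ _ n.le_succ, hn _ n.le_succ⟩
  let T : Set ι := {i | Minimal (fun j ↦ f j = f i) i}
  have hT : IsAntichain r T := fun i _ j hj hij h ↦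
    hij (h.1.antisymm (Minimal.le_of_le (P := fun k ↦ f k = f j) hj h.2 h.1))
  have hTfin : T.Finite := hT.finite_of_wellQuasiOrdered hr
  refine ⟨hTfin.toFinset, fun i ↦ ?_⟩
  obtain ⟨j, hji, hj⟩ := exists_minimal_le_of_wellFoundedLT (fun j ↦ f j = f i) i rfl
  refine ⟨j, ?_, hji, hj.prop⟩
  simpa only [Set.Finite.mem_toFinset, T, Set.mem_ofPred_eq, hj.prop] using hj

lemma inf_map_union_le_sup {ι L : Type*} [LinearOrder ι] [Lattice L] [IsModularLattice L]
    {F : Set ι → L} (hF : Monotone F) {J W : L} (hWJ : W ≤ J) {u : Set ι} (s : Finset ι)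
    (hlt : ∀ i ∈ s, ∀ j ∈ u, i < j) (hup : IsUpperSet (↑s ∪ u))
    (hstep : ∀ i ∈ s, J ⊓ F (Set.Ici i) ≤ W ⊔ F (Set.Ioi i)) :
    J ⊓ F (↑s ∪ u) ≤ W ⊔ F u := by
  -- Remove the smallest element of `s` and absorb it into `W` by the modular law.
  induction s using Finset.induction_on_min with
  | empty => simpa only [Finset.coe_empty, Set.empty_union] using inf_le_right.trans le_sup_right
  | insert i s hi ih =>
    have hIci : ↑(insert i s) ∪ u ⊆ Set.Ici i := by
      rintro j (hj | hj)
      · rcases Finset.mem_insert.1 hj with rfl | hj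
        exacts [le_rfl, (hi j hj).le]
      · exact (hlt i (Finset.mem_insert_self i s) j hj).le
    have hIoi : Set.Ioi i = ↑s ∪ u := by
      ext j
      have hmem := @hup i j
      grind
    have hup' : IsUpperSet (↑s ∪ u) := hIoi ▸ isUpperSet_Ioi i
    calc J ⊓ F (↑(insert i s) ∪ u)
        ≤ J ⊓ (W ⊔ F (↑s ∪ u)) := by
          refine le_inf inf_le_left ?_
          rw [← hIoi]
          exact (inf_le_inf_left J (hF hIci)).trans (hstep i (Finset.mem_insert_self i s))
      _ = W ⊔ J ⊓ F (↑s ∪ u) := by rw [inf_comm, inf_comm J, sup_inf_assoc_of_le _ hWJ]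
      _ ≤ W ⊔ F u := sup_le le_sup_left <| ih
          (fun k hk ↦ hlt k (Finset.mem_insert_of_mem hk)) hup'
          (fun k hk ↦ hstep k (Finset.mem_insert_of_mem hk))

section Adic

variable {R : Type*} [CommRing R] {I : Ideal R} {M N : Type*} [AddCommGroup M] [Module R M]
  [AddCommGroup N] [Module R N]

lemma isPrecomplete_of_surjective [IsPrecomplete I M] {f : M →ₗ[R] N}
    (hf : Function.Surjective f) : IsPrecomplete I N := by
  rw [← AdicCompletion.of_surjective_iff]
  have hcomp : AdicCompletion.of I N ∘ f = AdicCompletion.map I f ∘ AdicCompletion.of I M :=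
    funext fun x ↦ (AdicCompletion.map_of I f x).symm
  exact .of_comp <| hcomp ▸
    (AdicCompletion.map_surjective I hf).comp (AdicCompletion.of_surjective I M)

lemma isPrecomplete_pi {ι : Type*} [Finite ι] {M : ι → Type*} [∀ i, AddCommGroup (M i)]
    [∀ i, Module R (M i)] [∀ i, IsPrecomplete I (M i)] : IsPrecomplete I (∀ i, M i) := by
  cases nonempty_fintype ι
  classical
  rw [← AdicCompletion.of_surjective_iff]
  intro x
  let e := AdicCompletion.piEquivOfFintype I M
  choose m hm using fun i ↦ AdicCompletion.of_surjective I (M i) (e x i)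
  have he : e (AdicCompletion.of I (∀ i, M i) m) = e x := by
    ext1 i
    rw [← hm i, AdicCompletion.piEquivOfFintype_apply]
    exact AdicCompletion.map_of I (LinearMap.proj i : (∀ i, M i) →ₗ[R] M i) m
  exact ⟨m, e.injective he⟩

lemma isPrecomplete_of_finite (A : Type*) [Ring A] [Algebra R A] [IsPrecomplete I A]
    (N : Type*) [AddCommGroup N] [Module R N] [Module A N] [IsScalarTower R A N]
    [Module.Finite A N] : IsPrecomplete I N := by
  obtain ⟨n, f, hf⟩ := Module.Finite.exists_fin' A N
  have := isPrecomplete_pi (I := I) (M := fun _ : Fin n ↦ A)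
  exact isPrecomplete_of_surjective (f := f.restrictScalars R) hf

lemma exists_forall_sub_sum_range_mem {F W : ℕ → Submodule R M} {J : Submodule R M}
    (hWJ : ∀ n, W n ≤ J) (hFW : ∀ n, J ⊓ F n ≤ W n ⊔ F (n + 1)) {x : M} (hx : x ∈ J ⊓ F 0) :
    ∃ y : ℕ → M, (∀ n, y n ∈ W n) ∧ ∀ n, x - ∑ k ∈ Finset.range n, y k ∈ J ⊓ F n := by
  have hreduce : ∀ n, ∀ z : M, ∃ y ∈ W n, z ∈ J ⊓ F n → z - y ∈ J ⊓ F (n + 1) := by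
    intro n z
    by_cases hz : z ∈ J ⊓ F n
    · obtain ⟨y, hy, w, hw, rfl⟩ := Submodule.mem_sup.1 (hFW n hz)
      refine ⟨y, hy, fun _ ↦ ⟨J.sub_mem hz.1 (hWJ n hy), ?_⟩⟩
      rwa [add_sub_cancel_left]
    · exact ⟨0, zero_mem _, fun h ↦ absurd h hz⟩
  choose y hyW hy using hreduce
  let z : ℕ → M := Nat.rec x fun n z ↦ z - y n z
  have hz : ∀ n, x - ∑ k ∈ Finset.range n, y k (z k) = z n := fun n ↦ by
    induction n with
    | zero => exact (congrArg (x - ·) (Finset.sum_range_zero _)).trans (sub_zero x)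
    | succ n ih => rw [Finset.sum_range_succ, ← sub_sub, ih]
  refine ⟨fun n ↦ y n (z n), fun n ↦ hyW n _, fun n ↦ ?_⟩
  rw [hz]
  induction n with
  | zero => exact hx
  | succ n ih => exact hy n _ ih

lemma exists_sum_range_add_smodEq [IsPrecomplete I M] (D : ℕ) {y : ℕ → M}
    (hy : ∀ k, y k ∈ (I ^ (k - D) • ⊤ : Submodule R M)) :
    ∃ l, ∀ n, ∑ k ∈ Finset.range (n + D), y k ≡ l [SMOD (I ^ n • ⊤ : Submodule R M)] := by
  refine IsPrecomplete.prec ‹_› fun {m n} hmn ↦ (SModEq.sub_mem.2 ?_).symm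
  rw [← Finset.sum_Ico_eq_sub y (Nat.add_le_add_right hmn D)]
  refine Submodule.sum_mem _ fun k hk ↦ ?_
  have hmk : m ≤ k - D := Nat.le_sub_of_add_le (Finset.mem_Ico.1 hk).1
  exact Submodule.smul_mono_left (Ideal.pow_le_pow_right hmk) (hy k)

lemma le_of_inf_pow_smul_le [IsHausdorff I M] {J N : Submodule R M} [IsPrecomplete I N]
    (hNJ : N ≤ J) (D : ℕ)
    (hJ : ∀ n, J ⊓ I ^ n • ⊤ ≤ I ^ (n - D) • N ⊔ I ^ (n + 1) • ⊤) : J ≤ N := by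
  intro x hx
  have hx0 : x ∈ J ⊓ I ^ 0 • ⊤ := ⟨hx, by rw [pow_zero, one_smul]; exact Submodule.mem_top⟩
  obtain ⟨y, hyN, hxy⟩ := exists_forall_sub_sum_range_mem
    (fun n ↦ (Submodule.smul_le_right (I := I ^ (n - D))).trans hNJ) hJ hx0
  let y' : ℕ → N := fun k ↦ ⟨y k, Submodule.smul_le_right (hyN k)⟩
  obtain ⟨l, hl⟩ := exists_sum_range_add_smodEq (I := I) D (y := y') fun k ↦
    (Submodule.mem_smul_top_iff _ N (y' k)).2 (hyN k)
  suffices x - l = 0 from sub_eq_zero.1 this ▸ l.2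
  refine IsHausdorff.haus ‹_› _ fun n ↦ SModEq.zero.2 ?_
  have htail : x - ∑ k ∈ Finset.range (n + D), y k ∈ I ^ n • (⊤ : Submodule R M) :=
    Submodule.smul_mono_left (Ideal.pow_le_pow_right (n.le_add_right D)) (hxy (n + D)).2
  have hlim : ∑ k ∈ Finset.range (n + D), y k - l ∈ I ^ n • (⊤ : Submodule R M) := by
    have := (Submodule.mem_smul_top_iff _ N _).1 (SModEq.sub_mem.1 (hl n))
    simp only [AddSubgroupClass.coe_sub, AddSubmonoidClass.coe_finsetSum, y'] at this
    exact Submodule.smul_mono le_rfl le_top this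
  simpa only [sub_add_sub_cancel] using add_mem htail hlim

end Adic

section Monomials

variable {R σ : Type*} [CommRing R] (h : σ → R)

/-- The value of the monomial with exponent vector `α` at the point `h`. -/
def evalMonomial (α : σ →₀ ℕ) : R :=
  α.prod fun i k ↦ h i ^ k

lemma evalMonomial_add (α β : σ →₀ ℕ) :
    evalMonomial h (α + β) = evalMonomial h α * evalMonomial h β :=
  Finsupp.prod_add_index' (fun _ ↦ pow_zero _) fun _ _ _ ↦ pow_add _ _ _

lemma evalMonomial_single_one (i : σ) : evalMonomial h (Finsupp.single i 1) = h i :=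
  (Finsupp.prod_single_index (h := fun i k ↦ h i ^ k) (pow_zero _)).trans (pow_one _)

lemma span_range_pow_eq_span_evalMonomial (n : ℕ) :
    Ideal.span (Set.range h) ^ n = Ideal.span (evalMonomial h '' {α | n ≤ α.degree}) := by
  have heval (α : σ →₀ ℕ) (c : R) :
      MvPolynomial.eval h (.monomial α c) = c * evalMonomial h α := MvPolynomial.eval_monomial
  apply le_antisymm
  · intro r hr
    obtain ⟨p, hp, rfl⟩ := (Ideal.mem_span_pow_iff_exists_isHomogeneous h r).1 hr
    rw [p.as_sum, map_sum]
    refine Ideal.sum_mem _ fun α hα ↦ ?_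
    rw [heval]
    have hdeg : n ≤ α.degree := (hp.degree_eq_sum_deg_support hα).le
    exact Ideal.mul_mem_left _ _ (Ideal.subset_span (Set.mem_image_of_mem _ hdeg))
  · rw [Ideal.span_le]
    rintro _ ⟨α, hα, rfl⟩
    refine Ideal.pow_le_pow_right hα ((Ideal.mem_span_pow_iff_exists_isHomogeneous h _).2 ?_)
    exact ⟨.monomial α 1, MvPolynomial.isHomogeneous_monomial 1 rfl, (heval α 1).trans (one_mul _)⟩

end Monomials

section SetSMul

variable {R A M : Type*} [CommRing R] [Ring A] [Algebra R A] [AddCommGroup M] [Module R M]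
  [Module A M] [IsScalarTower R A M]

lemma restrictScalars_set_smul (s : Set R) (N : Submodule A M) :
    (s • N).restrictScalars R = s • N.restrictScalars R := by
  simp_rw [Submodule.set_smul_eq_iSup]
  exact map_iSup₂ (Submodule.restrictScalarsLatticeHom R A M) _

lemma restrictScalars_evalMonomial_image_smul {σ : Type*} (h : σ → R) (n : ℕ) (N : Submodule A M) :
    (evalMonomial h '' {α | n ≤ α.degree} • N).restrictScalars R =
      Ideal.span (Set.range h) ^ n • N.restrictScalars R := by
  rw [restrictScalars_set_smul, span_range_pow_eq_span_evalMonomial, Submodule.span_smul_eq]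

lemma set_smul_le_self (s : Set R) (N : Submodule A M) : s • N ≤ N :=
  Submodule.set_smul_le _ _ _ fun r _ _ hx ↦ N.smul_of_tower_mem r hx

lemma evalMonomial_smul_image_smul_le {σ : Type*} {h : σ → R} {U V : Set (σ →₀ ℕ)} {γ : σ →₀ ℕ}
    (hUV : ∀ β ∈ U, γ + β ∈ V) (N : Submodule A M) :
    evalMonomial h γ • evalMonomial h '' U • N ≤ evalMonomial h '' V • N := by
  rw [Submodule.set_smul_eq_iSup, iSup_image]
  simp only [Submodule.smul_iSup', smul_smul, ← evalMonomial_add]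
  refine iSup₂_le fun β hβ ↦ ?_
  rintro _ ⟨x, hx, rfl⟩
  exact Submodule.mem_set_smul_of_mem_mem (Set.mem_image_of_mem _ (hUV β hβ)) hx

end SetSMul

section LeadingCoeff

variable {R A M σ : Type*} [CommRing R] [Ring A] [Algebra R A] [AddCommGroup M] [Module R M]
  [Module A M] [IsScalarTower R A M] [LinearOrder σ] {h : σ → R}

variable (h) in
/-- The `A`-submodule of all `m` such that `h ^ α • m` is the leading term of an element of `J`,
that is, `h ^ α • m` lies in `J` up to multiples of monomials in `h` which are larger than `h ^ α`
for the degree lexicographic order. -/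
def leadingCoeff (J : Submodule A M) (α : σ →₀ ℕ) : Submodule A M :=
  (J ⊔ evalMonomial h '' {β | toDegLex α < toDegLex β} • ⊤).comap
    (DistribSMul.toLinearMap A M (evalMonomial h α))

lemma leadingCoeff_mono {J N : Submodule A M} (hJN : J ≤ N) (α : σ →₀ ℕ) :
    leadingCoeff h J α ≤ leadingCoeff h N α :=
  Submodule.comap_mono (sup_le_sup_right hJN _)

lemma evalMonomial_add_smul_leadingCoeff_le (N : Submodule A M) (γ β : σ →₀ ℕ) :
    evalMonomial h (γ + β) • leadingCoeff h N β ≤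
      evalMonomial h γ • N ⊔ evalMonomial h '' {δ | toDegLex (γ + β) < toDegLex δ} • ⊤ := by
  have hβ : evalMonomial h β • leadingCoeff h N β ≤
      N ⊔ evalMonomial h '' {δ | toDegLex β < toDegLex δ} • ⊤ :=
    Submodule.map_comap_le _ _
  rw [evalMonomial_add, mul_smul]
  refine (smul_mono_right _ hβ).trans ?_
  rw [Submodule.smul_sup']
  refine sup_le_sup_left (evalMonomial_smul_image_smul_le (fun δ hδ ↦ ?_) ⊤) _
  simpa only [Set.mem_ofPred_eq, toDegLex_add, add_lt_add_iff_left] using hδ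

lemma monotone_leadingCoeff (J : Submodule A M) : Monotone (leadingCoeff h J) := by
  intro β α hβα
  refine Submodule.map_le_iff_le_comap.1 ?_
  have := evalMonomial_add_smul_leadingCoeff_le (h := h) J (α - β) β
  rw [tsub_add_cancel_of_le hβα] at this
  exact this.trans (sup_le_sup_right (Submodule.smul_le_self_of_tower _ J) _)

lemma range_smul_top_le_leadingCoeff (J : Submodule A M) (α : σ →₀ ℕ) :
    Set.range h • ⊤ ≤ leadingCoeff h J α := by
  refine Submodule.set_smul_le _ _ _ ?_
  rintro _ m ⟨i, rfl⟩ -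
  refine Submodule.mem_sup_right ?_
  change evalMonomial h α • h i • m ∈ _
  rw [smul_smul, ← evalMonomial_single_one h i, ← evalMonomial_add]
  refine Submodule.mem_set_smul_of_mem_mem (Set.mem_image_of_mem _ ?_) Submodule.mem_top
  have hi : toDegLex 0 < toDegLex (Finsupp.single i 1) :=
    Finsupp.DegLex.lt_iff.2 (.inl (by simp))
  simpa only [Set.mem_ofPred_eq, toDegLex_add] using lt_add_of_pos_right _ hi

lemma inf_evalMonomial_image_smul_le_of_leadingCoeff_le {J N : Submodule A M} {α β : σ →₀ ℕ}
    (hβα : β ≤ α) (hJN : leadingCoeff h J α ≤ leadingCoeff h N β) :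
    J ⊓ evalMonomial h '' {δ | toDegLex α ≤ toDegLex δ} • ⊤ ≤
      evalMonomial h (α - β) • N ⊔ evalMonomial h '' {δ | toDegLex α < toDegLex δ} • ⊤ := by
  have hsup : evalMonomial h '' {δ | toDegLex α ≤ toDegLex δ} • (⊤ : Submodule A M) ≤
      evalMonomial h α • ⊤ ⊔ evalMonomial h '' {δ | toDegLex α < toDegLex δ} • ⊤ := by
    refine Submodule.set_smul_le _ _ _ ?_
    rintro _ m ⟨δ, hδ, rfl⟩ hm
    obtain heq | hlt := eq_or_lt_of_le (α := DegLex (σ →₀ ℕ)) hδ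
    · obtain rfl := toDegLex_inj.1 heq
      exact Submodule.mem_sup_left (Submodule.smul_mem_pointwise_smul m _ _ hm)
    · exact Submodule.mem_sup_right
        (Submodule.mem_set_smul_of_mem_mem (Set.mem_image_of_mem _ hlt) hm)
  rintro x ⟨hxJ, hx⟩
  obtain ⟨_, ⟨m, -, rfl⟩, y, hy, rfl⟩ := Submodule.mem_sup.1 (hsup hx)
  have hm : m ∈ leadingCoeff h J α :=
    Submodule.mem_sup.2 ⟨_, hxJ, -y, neg_mem hy, add_neg_cancel_right _ _⟩
  have := evalMonomial_add_smul_leadingCoeff_le N (α - β) β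
    (Submodule.smul_mem_pointwise_smul m _ _ (hJN hm))
  rw [tsub_add_cancel_of_le hβα] at this
  exact add_mem this (Submodule.mem_sup_right hy)

lemma inf_evalMonomial_image_smul_le_of_forall_leadingCoeff_le [Finite σ] {J N : Submodule A M}
    {D : ℕ} (hNJ : N ≤ J)
    (hJN : ∀ α, ∃ β ≤ α, β.degree ≤ D ∧ leadingCoeff h J α ≤ leadingCoeff h N β) (n : ℕ) :
    J ⊓ evalMonomial h '' {α | n ≤ α.degree} • ⊤ ≤
      evalMonomial h '' {α | n - D ≤ α.degree} • N ⊔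
        evalMonomial h '' {α | n + 1 ≤ α.degree} • ⊤ := by
  let F : Set (DegLex (σ →₀ ℕ)) → Submodule A M := fun U ↦ evalMonomial h '' (toDegLex ⁻¹' U) • ⊤
  let u : Set (DegLex (σ →₀ ℕ)) := {i | n + 1 ≤ (ofDegLex i).degree}
  let s : Finset (DegLex (σ →₀ ℕ)) := (Finsupp.finite_of_degree_eq (σ := σ) n).toFinset
  have hF : Monotone F := fun U V hUV ↦
    Submodule.set_smul_mono_left _ (Set.image_mono (Set.preimage_mono hUV))
  have hs : ∀ i, i ∈ s ↔ (ofDegLex i).degree = n := fun i ↦ Set.Finite.mem_toFinset _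
  have hsu : ↑s ∪ u = {i | n ≤ (ofDegLex i).degree} := by
    ext i
    simp only [Set.mem_union, Finset.mem_coe, hs, u, Set.mem_ofPred_eq]
    lia
  have hlt : ∀ i ∈ s, ∀ j ∈ u, i < j := fun i hi j hj ↦
    Finsupp.DegLex.lt_iff.2 (.inl ((hs i).1 hi ▸ hj))
  have hup : IsUpperSet (↑s ∪ u) :=
    hsu ▸ fun i j hij hi ↦ hi.trans (Finsupp.DegLex.monotone_degree hij)
  have hstep : ∀ i ∈ s, J ⊓ F (Set.Ici i) ≤
      evalMonomial h '' {α | n - D ≤ α.degree} • N ⊔ F (Set.Ioi i) := by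
    intro i hi
    obtain ⟨β, hβα, hβD, hβ⟩ := hJN (ofDegLex i)
    refine (inf_evalMonomial_image_smul_le_of_leadingCoeff_le hβα hβ).trans (sup_le_sup_right ?_ _)
    have hdeg : n - D ≤ (ofDegLex i - β).degree := by
      have := congrArg Finsupp.degree (tsub_add_cancel_of_le hβα)
      rw [map_add, (hs i).1 hi] at this
      lia
    rintro _ ⟨x, hx, rfl⟩
    exact Submodule.mem_set_smul_of_mem_mem (Set.mem_image_of_mem _ hdeg) hx
  have := inf_map_union_le_sup hF ((set_smul_le_self _ N).trans hNJ) s hlt hup hstep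
  rwa [hsu] at this

lemma exists_fg_leadingCoeff_le {Q : Submodule A M} [WellFoundedGT (Set.Ici Q)]
    {J : Submodule A M} {α : σ →₀ ℕ} (hQ : ∀ N : Submodule A M, Q ≤ leadingCoeff h N α) :
    ∃ N ≤ J, N.FG ∧ leadingCoeff h J α ≤ leadingCoeff h N α := by
  obtain ⟨N, ⟨hNJ, hN⟩, hmax⟩ := exists_maximalFor_of_wellFoundedGT
    (fun N : Submodule A M ↦ N ≤ J ∧ N.FG)
    (fun N ↦ (⟨leadingCoeff h N α, hQ N⟩ : Set.Ici Q)) ⟨⊥, bot_le, Submodule.fg_bot⟩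
  refine ⟨N, hNJ, hN, fun m hm ↦ ?_⟩
  obtain ⟨f, hf, y, hy, hfy⟩ := Submodule.mem_sup.1 hm
  let N' : Submodule A M := N ⊔ Submodule.span A {f}
  have hN'J : N' ≤ J := sup_le hNJ ((Submodule.span_singleton_le_iff_mem f J).2 hf)
  have hfN' : f ∈ N' := Submodule.mem_sup_right (Submodule.mem_span_singleton_self f)
  have hN'N : leadingCoeff h N' α ≤ leadingCoeff h N α :=
    hmax ⟨hN'J, hN.sup (Submodule.fg_span_singleton f)⟩ (leadingCoeff_mono le_sup_left α)
  exact hN'N (Submodule.mem_sup.2 ⟨f, hfN', y, hy, hfy⟩)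

lemma exists_fg_forall_leadingCoeff_le [Finite σ]
    [IsNoetherian A (M ⧸ (Set.range h • ⊤ : Submodule A M))] (J : Submodule A M) :
    ∃ N ≤ J, N.FG ∧ ∃ D : ℕ, ∀ α, ∃ β ≤ α, β.degree ≤ D ∧
      leadingCoeff h J α ≤ leadingCoeff h N β := by
  have hQ (N : Submodule A M) (α : σ →₀ ℕ) : Set.range h • ⊤ ≤ leadingCoeff h N α :=
    range_smul_top_le_leadingCoeff N α
  have : WellFoundedGT (Set.Ici (Set.range h • ⊤ : Submodule A M)) :=
    (Submodule.comapMkQRelIso _).symm.toOrderEmbedding.wellFoundedGT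
  choose N hNJ hN hJN using fun α ↦ exists_fg_leadingCoeff_le (J := J) fun N ↦ hQ N α
  obtain ⟨S, hS⟩ := exists_finset_forall_exists_le_map_eq
    (f := fun α ↦ (⟨leadingCoeff h J α, hQ J α⟩ : Set.Ici (Set.range h • ⊤ : Submodule A M)))
    fun _ _ hαβ ↦ monotone_leadingCoeff J hαβ
  refine ⟨S.sup N, Finset.sup_le fun β _ ↦ hNJ β, Submodule.fg_finset_sup S N fun β _ ↦ hN β,
    S.sup Finsupp.degree, fun α ↦ ?_⟩
  obtain ⟨β, hβS, hβα, hβ⟩ := hS α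
  refine ⟨β, hβα, Finset.le_sup hβS, ?_⟩
  exact (congrArg Subtype.val hβ).ge.trans
    ((hJN β).trans (leadingCoeff_mono (Finset.le_sup hβS) β))

end LeadingCoeff

lemma span_algebraMap_image_eq_set_smul_top {R A : Type*} [CommRing R] [Ring A] [Algebra R A]
    (s : Set R) : Ideal.span (algebraMap R A '' s) = s • (⊤ : Submodule A A) := by
  have himage : algebraMap R A '' s = s • ({1} : Set A) := by
    rw [Set.smul_singleton]
    exact Set.image_congr fun r _ ↦ Algebra.algebraMap_eq_smul_one r
  rw [himage, Ideal.span, Submodule.span_set_smul, ← Ideal.span, Ideal.span_singleton_one]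

theorem isNoetherianRing_of_adicComplete_general {R A M : Type*} [CommRing R] [Ring A]
    [Algebra R A] [AddCommGroup M] [Module R M] [Module A M] [IsScalarTower R A M] {I : Ideal R}
    (hI : I.FG) [IsPrecomplete I A] [IsHausdorff I M]
    [IsNoetherian A (M ⧸ ((I : Set R) • ⊤ : Submodule A M))] :
    IsNoetherian A M := by
  obtain ⟨r, h, rfl⟩ := Submodule.fg_iff_exists_fin_generating_family.1 hI
  have hQ : ((Ideal.span (Set.range h) : Ideal R) : Set R) • (⊤ : Submodule A M) =
      Set.range h • ⊤ := by
    apply Submodule.restrictScalars_injective R A M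
    rw [restrictScalars_set_smul, restrictScalars_set_smul, Submodule.coe_span_smul]
  have : IsNoetherian A (M ⧸ (Set.range h • ⊤ : Submodule A M)) := hQ ▸ ‹_›
  refine ⟨fun J ↦ ?_⟩
  obtain ⟨N, hNJ, hN, D, hD⟩ := exists_fg_forall_leadingCoeff_le (h := h) J
  have : Module.Finite A N := .of_fg hN
  have hNprec : IsPrecomplete (Ideal.span (Set.range h)) N := isPrecomplete_of_finite A N
  have : IsPrecomplete (Ideal.span (Set.range h)) (N.restrictScalars R) := hNprec
  have hJN : J.restrictScalars R ≤ N.restrictScalars R := by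
    refine le_of_inf_pow_smul_le (I := Ideal.span (Set.range h)) (N := N.restrictScalars R)
      hNJ D fun n ↦ ?_
    have hn := OrderHomClass.mono (Submodule.restrictScalarsLatticeHom R A M)
      (inf_evalMonomial_image_smul_le_of_forall_leadingCoeff_le hNJ hD n)
    rw [map_sup] at hn
    simp only [← Submodule.restrictScalars_top R A M, ← restrictScalars_evalMonomial_image_smul]
    exact hn
  exact le_antisymm hNJ hJN ▸ hN

/-- Let `R` be a commutative ring, `I ⊆ R` a finitely generated ideal, and `A`
an associative unital `R`-algebra. Suppose that `A`, as an `R`-module, is `I`-adically complete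
and separated. If the quotient ring `A/IA` is left Noetherian, then `A` is left Noetherian.
(Left ideals of the quotient ring `A/IA` coincide with `A`-submodules of the `A`-module
`A ⧸ IA`, so the hypothesis on `A/IA` is expressed via `IsNoetherian A (A ⧸ IA)`.) -/
theorem isNoetherianRing_of_adicComplete {R : Type*} [CommRing R] {A : Type*} [Ring A]
    [Algebra R A] (I : Ideal R) (hfg : I.FG) (hc : IsAdicComplete I A)
    (hnoeth : IsNoetherian A
      (A ⧸ (Ideal.span ((algebraMap R A) '' (I : Set R)) : Ideal A))) :
    IsNoetherianRing A := by
  rw [span_algebraMap_image_eq_set_smul_top] at hnoeth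
  exact isNoetherianRing_of_adicComplete_general hfg
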